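/- Let d₁, d₂ be positive integers with d₁d₂ ≥ 2, N = d₁d₂, and let U be Haar-distributed on U(N). With ρ₀, ρ₁ the partial traces over the second factor of the projectors onto the 0-th and 1-st columns of U, one has E[Tr(ρ₀²) · Tr(ρ₁²)] = ((d₁d₂(d₁d₂+2)−4)(d₁+d₂)² + 4) / (d₁d₂(d₁d₂−1)(d₁d₂+2)(d₁d₂+3)). -/

import Mathlib

/-!
Haar measure on the compact group `U(N)` is right invariant, so the derivative of any polynomial in
the entries of `U` and `Uᴴ` along a vector field `U ↦ U * A` integrates to zero; by complex
linearity this holds for every complex matrix `A`, in particular for the matrix units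
(`Der.integral_eq_zero`). Write `Xᵢ` for the `i`-th column of `U` viewed as a `d₁ × d₂` matrix, so
that `ρᵢ = Xᵢ Xᵢᴴ`. The derivation along `E_{ji}` maps `Xᵢ` to `Xⱼ`, maps `Xⱼᴴ` to `-Xᵢᴴ`, and
annihilates all other columns and adjoints of columns.

Applying it to products of at most two traces in the columns and their adjoints, with one factor `Xⱼᴴ`, and
summing over `j`, the relation `U * Uᴴ = 1` (`complete_one`, `complete_two`) removes the column `j`
and leaves trace polynomials in the columns `i` and `k` only. This gives the relations `moment_*`.
Derivations that merely mix the columns `i` and `k` give the relations `rot_*`. Together they are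
seven linear equations for seven unknown expectations, among them `E[Tr(ρᵢ²) Tr(ρₖ²)]` with
`i ≠ k`, and `solve_moments` solves them.
-/

open Matrix MeasureTheory

instance matrixMeasurableSpace {m n α : Type*} [MeasurableSpace α] :
    MeasurableSpace (Matrix m n α) :=
  inferInstanceAs (MeasurableSpace (m → n → α))

/-- For a unitary matrix `U` of size `d₁d₂` and a column index `i`, `rho U i` is the
partial trace over the second tensor factor of the rank-one projector onto the `i`-th
column of `U`: `(rho U i) a b = ∑ k, U_{(a,k),i} * conj (U_{(b,k),i})`. -/
noncomputable def rho {d₁ d₂ : ℕ} (U : Matrix.unitaryGroup (Fin (d₁ * d₂)) ℂ)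
    (i : Fin (d₁ * d₂)) : Matrix (Fin d₁) (Fin d₁) ℂ :=
  Matrix.of fun a b => ∑ k : Fin d₂,
    (U : Matrix (Fin (d₁ * d₂)) (Fin (d₁ * d₂)) ℂ) (finProdFinEquiv (a, k)) i *
      (starRingEnd ℂ) ((U : Matrix (Fin (d₁ * d₂)) (Fin (d₁ * d₂)) ℂ) (finProdFinEquiv (b, k)) i)

/-! ### Haar measure on the unitary group and derivatives along right translations -/

instance matrixBorelSpace {n : ℕ} : BorelSpace (Matrix (Fin n) (Fin n) ℂ) :=
  inferInstanceAs (BorelSpace (Fin n → Fin n → ℂ))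

/-- Rows of a unitary matrix have norm one, so `U(n)` is a closed subset of a polydisc. -/
instance unitaryGroup_compactSpace {n : ℕ} : CompactSpace (unitaryGroup (Fin n) ℂ) := by
  have hK : IsCompact (Set.pi Set.univ fun _ : Fin n => Set.pi Set.univ fun _ : Fin n =>
      Metric.closedBall (0 : ℂ) 1) :=
    isCompact_univ_pi fun _ => isCompact_univ_pi fun _ => isCompact_closedBall _ _
  refine isCompact_iff_compactSpace.1 (IsCompact.of_isClosed_subset hK ?_ ?_)
  · have : ((unitaryGroup (Fin n) ℂ : Submonoid _) : Set (Matrix (Fin n) (Fin n) ℂ))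
        = {A | A * star A = 1} := by
      ext A; exact mem_unitaryGroup_iff
    rw [this]
    exact isClosed_eq (by fun_prop) continuous_const
  · intro U hU i _ j _
    simpa using entry_norm_bound_of_unitary hU i j

/-- Compact groups are unimodular: a right translate of a Haar probability measure is again a Haar
probability measure, hence equal to it. -/
lemma haar_mulRightInvariant {n : ℕ} (μ : Measure (unitaryGroup (Fin n) ℂ))
    [μ.IsHaarMeasure] [IsProbabilityMeasure μ] : μ.IsMulRightInvariant := by
  constructor
  intro g
  have : IsProbabilityMeasure (μ.map (· * g)) :=
    Measure.isProbabilityMeasure_map (by fun_prop)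
  exact Measure.isHaarMeasure_eq_of_isProbabilityMeasure _ _

/-- `f'` is the derivative of the function `f` on `U(n)` along the right translations `U ↦ U * g t`.
It is required at every time `t`, with value `f' (U * g t)` there, because this is the form needed
for differentiating under the integral sign; for a one-parameter group `g` it is equivalent to the
condition at `t = 0`. -/
structure HasRealDer {n : ℕ} (g : ℝ → unitaryGroup (Fin n) ℂ)
    (f f' : unitaryGroup (Fin n) ℂ → ℂ) : Prop where
  cont : Continuous f
  cont' : Continuous f'
  der : ∀ U t, HasDerivAt (fun s => f (U * g s)) (f' (U * g t)) t

namespace HasRealDer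
variable {n : ℕ} {g : ℝ → unitaryGroup (Fin n) ℂ} {f f' h h' : unitaryGroup (Fin n) ℂ → ℂ}

lemma add (hf : HasRealDer g f f') (hh : HasRealDer g h h') :
    HasRealDer g (fun U => f U + h U) (fun U => f' U + h' U) :=
  ⟨hf.cont.add hh.cont, hf.cont'.add hh.cont', fun U t => (hf.der U t).add (hh.der U t)⟩

lemma mul (hf : HasRealDer g f f') (hh : HasRealDer g h h') :
    HasRealDer g (fun U => f U * h U) (fun U => f' U * h U + f U * h' U) :=
  ⟨hf.cont.mul hh.cont, (hf.cont'.mul hh.cont).add (hf.cont.mul hh.cont'),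
    fun U t => (hf.der U t).mul (hh.der U t)⟩

/-- By right invariance `∫ f (U * g t)` does not depend on `t`, so its derivative vanishes. -/
lemma integral_eq_zero (hf : HasRealDer g f f') (hg0 : g 0 = 1)
    (μ : Measure (unitaryGroup (Fin n) ℂ)) [μ.IsHaarMeasure] [IsProbabilityMeasure μ] :
    ∫ U, f' U ∂μ = 0 := by
  have := haar_mulRightInvariant μ
  obtain ⟨C, hC⟩ := (isCompact_univ.image hf.cont').isBounded.exists_norm_le
  have hcont : ∀ t, Continuous fun U => f (U * g t) := fun t => hf.cont.comp (by fun_prop)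
  have key := hasDerivAt_integral_of_dominated_loc_of_deriv_le (μ := μ) (𝕜 := ℝ)
    (F := fun t U => f (U * g t)) (F' := fun t U => f' (U * g t)) (x₀ := 0)
    (bound := fun _ => C) (s := Set.univ) Filter.univ_mem
    (Filter.Eventually.of_forall fun t => (hcont t).aestronglyMeasurable)
    ((hcont 0).integrable_of_hasCompactSupport (HasCompactSupport.of_compactSpace _))
    (hf.cont'.comp (by fun_prop : Continuous fun U => U * g 0)).aestronglyMeasurable
    (Filter.Eventually.of_forall fun U t _ => hC _ ⟨_, trivial, rfl⟩)
    (integrable_const C)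
    (Filter.Eventually.of_forall fun U t _ => hf.der U t)
  have hconst : (fun t => ∫ U, f (U * g t) ∂μ) = fun _ => ∫ U, f U ∂μ := by
    funext t; exact integral_mul_right_eq_self f (g t)
  have h2 := key.2
  rw [hconst] at h2
  have := h2.unique (hasDerivAt_const _ _)
  simpa [hg0] using this

end HasRealDer

/-- The one-parameter subgroup `t ↦ exp (t X)` of `U(n)` generated by a skew-Hermitian `X`. -/
noncomputable def oneParam {n : ℕ} (X : Matrix (Fin n) (Fin n) ℂ) (hX : Xᴴ = -X) (t : ℝ) :
    unitaryGroup (Fin n) ℂ :=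
  ⟨NormedSpace.exp (t • X), by
    rw [mem_unitaryGroup_iff, star_eq_conjTranspose, ← exp_conjTranspose, conjTranspose_smul, hX,
      smul_neg, star_trivial,  exp_neg]
    exact mul_nonsing_inv _ ((isUnit_iff_isUnit_det _).1 (isUnit_exp _))⟩

lemma oneParam_zero {n : ℕ} (X : Matrix (Fin n) (Fin n) ℂ) (hX : Xᴴ = -X) :
    oneParam X hX 0 = 1 := by
  apply Subtype.ext; simp [oneParam]

-- A norm on matrices is needed only to differentiate the exponential.
section
attribute [local instance] Matrix.linftyOpNormedRing Matrix.linftyOpNormedAlgebra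

lemma hasRealDer_entry {n : ℕ} (X : Matrix (Fin n) (Fin n) ℂ) (hX : Xᴴ = -X) (a i : Fin n) :
    HasRealDer (oneParam X hX) (fun U => U.1 a i) (fun U => (U.1 * X) a i) := by
  refine ⟨continuous_subtype_val.matrix_elem a i, ?_, fun U t => ?_⟩
  · exact (Continuous.matrix_mul continuous_subtype_val continuous_const).matrix_elem a i
  · have h := (hasDerivAt_exp_smul_const (𝕂 := ℝ) X t).const_mul U.1
    have h2 := (LinearMap.toContinuousLinearMap
      (Matrix.entryLinearMap ℝ ℂ a i : Matrix (Fin n) (Fin n) ℂ →ₗ[ℝ] ℂ)).hasFDerivAt.comp_hasDerivAt t h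
    have e : (U * oneParam X hX t).1 * X = U.1 * (NormedSpace.exp (t • X) * X) :=
      mul_assoc _ _ _
    rw [e]
    exact h2
end

/-! ### Complexified derivations -/

lemma HasRealDer.conj {n : ℕ} {g : ℝ → unitaryGroup (Fin n) ℂ} {f f' : unitaryGroup (Fin n) ℂ → ℂ}
    (hf : HasRealDer g f f') : HasRealDer g (fun U => star (f U)) (fun U => star (f' U)) :=
  ⟨hf.cont.star, hf.cont'.star, fun U t => (hf.der U t).star⟩

lemma skew_re {n : ℕ} (A : Matrix (Fin n) (Fin n) ℂ) :
    ((1 / 2 : ℂ) • (A - Aᴴ))ᴴ = -((1 / 2 : ℂ) • (A - Aᴴ)) := by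
  rw [conjTranspose_smul, conjTranspose_sub, conjTranspose_conjTranspose, ← smul_neg, neg_sub]
  simp

lemma skew_im {n : ℕ} (A : Matrix (Fin n) (Fin n) ℂ) :
    ((-Complex.I / 2 : ℂ) • (A + Aᴴ))ᴴ = -((-Complex.I / 2 : ℂ) • (A + Aᴴ)) := by
  rw [conjTranspose_smul, conjTranspose_add, conjTranspose_conjTranspose, ← neg_smul, add_comm]
  simp [neg_div]

/-- `f'` is the derivative of `f` in the direction of the left-invariant vector field `U ↦ U * A`,
where `A` is an arbitrary complex matrix, extended complex linearly from skew-Hermitian directions.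
Writing `A = X + I Y` with `X = (A - Aᴴ) / 2` and `Y = -I (A + Aᴴ) / 2` skew-Hermitian, it is the
derivative along `X` plus `I` times the derivative along `Y`. This operator is a derivation, which
sends `U` to `U * A` and `Uᴴ` to `-(A * Uᴴ)`. -/
def Der {n : ℕ} (A : Matrix (Fin n) (Fin n) ℂ) (f f' : unitaryGroup (Fin n) ℂ → ℂ) : Prop :=
  ∃ f₁ f₂, HasRealDer (oneParam _ (skew_re A)) f f₁ ∧ HasRealDer (oneParam _ (skew_im A)) f f₂ ∧
    f' = fun U => f₁ U + Complex.I * f₂ U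

lemma re_add_im {n : ℕ} (A : Matrix (Fin n) (Fin n) ℂ) :
    (1 / 2 : ℂ) • (A - Aᴴ) + Complex.I • ((-Complex.I / 2 : ℂ) • (A + Aᴴ)) = A := by
  rw [smul_smul, show Complex.I * (-Complex.I / 2) = 1 / 2 by
    rw [← mul_div_assoc, mul_neg, Complex.I_mul_I, neg_neg], ← smul_add, sub_add_add_cancel,
    ← two_smul ℂ A, smul_smul]
  norm_num

namespace Der
variable {n : ℕ} {A : Matrix (Fin n) (Fin n) ℂ} {f f' h h' : unitaryGroup (Fin n) ℂ → ℂ}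

lemma integral_eq_zero (hf : Der A f f')
    (μ : Measure (unitaryGroup (Fin n) ℂ)) [μ.IsHaarMeasure] [IsProbabilityMeasure μ] :
    ∫ U, f' U ∂μ = 0 := by
  obtain ⟨f₁, f₂, h₁, h₂, rfl⟩ := hf
  rw [integral_add, integral_const_mul, h₁.integral_eq_zero (oneParam_zero _ _),
    h₂.integral_eq_zero (oneParam_zero _ _)]
  · simp
  · exact h₁.cont'.integrable_of_hasCompactSupport (HasCompactSupport.of_compactSpace _)
  · exact (h₂.cont'.integrable_of_hasCompactSupport
      (HasCompactSupport.of_compactSpace _)).const_mul _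

lemma continuous (hf : Der A f f') : Continuous f' := by
  obtain ⟨f₁, f₂, h₁, h₂, rfl⟩ := hf
  exact h₁.cont'.add (continuous_const.mul h₂.cont')

lemma congr {g' : unitaryGroup (Fin n) ℂ → ℂ} (hf : Der A f f') (h : ∀ U, f' U = g' U) :
    Der A f g' := by
  rwa [← show f' = g' from funext h]

lemma add (hf : Der A f f') (hh : Der A h h') :
    Der A (fun U => f U + h U) (fun U => f' U + h' U) := by
  obtain ⟨f₁, f₂, h₁, h₂, rfl⟩ := hf
  obtain ⟨g₁, g₂, k₁, k₂, rfl⟩ := hh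
  exact ⟨_, _, h₁.add k₁, h₂.add k₂, by funext U; ring⟩

lemma mul (hf : Der A f f') (hh : Der A h h') :
    Der A (fun U => f U * h U) (fun U => f' U * h U + f U * h' U) := by
  obtain ⟨f₁, f₂, h₁, h₂, rfl⟩ := hf
  obtain ⟨g₁, g₂, k₁, k₂, rfl⟩ := hh
  exact ⟨_, _, h₁.mul k₁, h₂.mul k₂, by funext U; ring⟩

lemma zero : Der A (fun _ => 0) (fun _ => 0) :=
  ⟨fun _ => 0, fun _ => 0, ⟨continuous_const, continuous_const, fun _ _ => hasDerivAt_const _ _⟩,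
    ⟨continuous_const, continuous_const, fun _ _ => hasDerivAt_const _ _⟩, by simp⟩

lemma sum {ι : Type*} (s : Finset ι) {F F' : ι → unitaryGroup (Fin n) ℂ → ℂ}
    (hF : ∀ i ∈ s, Der A (F i) (F' i)) :
    Der A (fun U => ∑ i ∈ s, F i U) (fun U => ∑ i ∈ s, F' i U) := by
  classical
  induction s using Finset.induction_on with
  | empty => simpa using zero
  | insert i s hi ih =>
    simp only [Finset.sum_insert hi]
    exact (hF i (by simp)).add (ih fun k hk => hF k (by simp [hk]))

variable (A) in
lemma entry (a k : Fin n) : Der A (fun U => U.1 a k) (fun U => (U.1 * A) a k) := by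
  refine ⟨_, _, hasRealDer_entry _ _ a k, hasRealDer_entry _ _ a k, ?_⟩
  funext U
  conv_lhs => rw [← re_add_im A]
  rw [mul_add, mul_smul_comm Complex.I]
  rfl

variable (A) in
lemma star_entry (a k : Fin n) :
    Der A (fun U => star (U.1 a k)) (fun U => -(A * U.1ᴴ) k a) := by
  refine ⟨_, _, (hasRealDer_entry _ _ a k).conj, (hasRealDer_entry _ _ a k).conj, ?_⟩
  funext U
  conv_lhs => rw [← re_add_im A]
  simp only [← conjTranspose_apply, conjTranspose_mul, skew_re, skew_im]
  rw [add_mul, smul_mul_assoc Complex.I]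
  simp only [neg_mul, Matrix.neg_apply, Matrix.add_apply, Matrix.smul_apply, smul_eq_mul]
  ring

end Der

/-- Entrywise version of `Der` for a matrix-valued function `F`. -/
def DerM {n p q : ℕ} (A : Matrix (Fin n) (Fin n) ℂ)
    (F F' : unitaryGroup (Fin n) ℂ → Matrix (Fin p) (Fin q) ℂ) : Prop :=
  ∀ a b, Der A (fun U => F U a b) (fun U => F' U a b)

lemma DerM.mul {n p q r : ℕ} {A : Matrix (Fin n) (Fin n) ℂ}
    {F F' : unitaryGroup (Fin n) ℂ → Matrix (Fin p) (Fin q) ℂ}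
    {G G' : unitaryGroup (Fin n) ℂ → Matrix (Fin q) (Fin r) ℂ}
    (hF : DerM A F F') (hG : DerM A G G') :
    DerM A (fun U => F U * G U) (fun U => F' U * G U + F U * G' U) := fun a b => by
  simp only [Matrix.add_apply, Matrix.mul_apply, ← Finset.sum_add_distrib]
  exact Der.sum _ fun k _ => (hF a k).mul (hG k b)

lemma DerM.trace {n p : ℕ} {A : Matrix (Fin n) (Fin n) ℂ}
    {F F' : unitaryGroup (Fin n) ℂ → Matrix (Fin p) (Fin p) ℂ} (hF : DerM A F F') :
    Der A (fun U => (F U).trace) (fun U => (F' U).trace) :=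
  Der.sum _ fun k _ => hF k k

/-! ### Columns of a unitary as rectangular matrices -/

variable {d₁ d₂ : ℕ}

/-- The `i`-th column of `U`, a vector of `ℂ^{d₁} ⊗ ℂ^{d₂}`, as a `d₁ × d₂` matrix `Xᵢ`. -/
def colMat (U : unitaryGroup (Fin (d₁ * d₂)) ℂ) (i : Fin (d₁ * d₂)) : Matrix (Fin d₁) (Fin d₂) ℂ :=
  Matrix.of fun a k => U.1 (finProdFinEquiv (a, k)) i

lemma rho_eq (U : unitaryGroup (Fin (d₁ * d₂)) ℂ) (i : Fin (d₁ * d₂)) :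
    rho U i = colMat U i * (colMat U i)ᴴ := by
  ext a b
  simp [rho, colMat, Matrix.mul_apply]

/-- The matrix unit `E_{ji}` replaces the column `Xᵢ` by `Xⱼ` and kills all other columns. -/
lemma derM_col (i j k : Fin (d₁ * d₂)) :
    DerM (Matrix.single j i 1) (fun U => colMat U k)
      (fun U => (if k = i then (1 : ℂ) else 0) • colMat U j) := fun a b => by
  refine (Der.entry _ _ _).congr fun U => ?_
  by_cases h : k = i
  · subst h; simp [colMat]
  · simp [h, colMat]

/-- The matrix unit `E_{ji}` sends `Xⱼᴴ` to `-Xᵢᴴ` and kills the adjoints of all other columns. -/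
lemma derM_col_conj (i j k : Fin (d₁ * d₂)) :
    DerM (Matrix.single j i 1) (fun U => (colMat U k)ᴴ)
      (fun U => (if k = j then (-1 : ℂ) else 0) • (colMat U i)ᴴ) := fun a b => by
  refine (Der.star_entry _ _ _).congr fun U => ?_
  by_cases h : k = j
  · subst h; simp [colMat]
  · simp [h, colMat]

/-- The relation `Uᴴ * U = 1`. -/
lemma orth (U : unitaryGroup (Fin (d₁ * d₂)) ℂ) (i j : Fin (d₁ * d₂)) :
    ((colMat U i)ᴴ * colMat U j).trace = if i = j then 1 else 0 := by
  have h := congrFun₂ (mem_unitaryGroup_iff'.1 U.2) i j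
  rw [Matrix.one_apply] at h
  rw [← h, Matrix.mul_apply, ← finProdFinEquiv.sum_comp, Fintype.sum_prod_type, Finset.sum_comm]
  rfl

/-- The relation `U * Uᴴ = 1`. -/
lemma complete (U : unitaryGroup (Fin (d₁ * d₂)) ℂ) (a b : Fin d₁) (k l : Fin d₂) :
    ∑ j, (colMat U j)ᴴ l b * colMat U j a k = if a = b ∧ k = l then 1 else 0 := by
  have h := congrFun₂ (mem_unitaryGroup_iff.1 U.2) (finProdFinEquiv (a, k)) (finProdFinEquiv (b, l))
  rw [Matrix.one_apply] at h
  simp only [EmbeddingLike.apply_eq_iff_eq, Prod.mk.injEq] at h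
  rw [← h, Matrix.mul_apply]
  exact Finset.sum_congr rfl fun _ _ => mul_comm _ _

lemma complete_one (U : unitaryGroup (Fin (d₁ * d₂)) ℂ) (B : Matrix (Fin d₁) (Fin d₁) ℂ)
    (C : Matrix (Fin d₂) (Fin d₂) ℂ) :
    ∑ j, ((colMat U j)ᴴ * (B * (colMat U j * C))).trace = B.trace * C.trace := by
  have h : ∀ j, ((colMat U j)ᴴ * (B * (colMat U j * C))).trace
      = ∑ l, ∑ b, ∑ a, ∑ k, B b a * C k l * ((colMat U j)ᴴ l b * colMat U j a k) := fun j => by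
    simp only [Matrix.trace, Matrix.diag, Matrix.mul_apply, Finset.mul_sum]
    refine Finset.sum_congr rfl fun l _ => Finset.sum_congr rfl fun b _ =>
      Finset.sum_congr rfl fun a _ => Finset.sum_congr rfl fun k _ => by ring
  have h' : ∑ j, ((colMat U j)ᴴ * (B * (colMat U j * C))).trace
      = ∑ l, ∑ b, ∑ a, ∑ k, B b a * C k l * (if a = b ∧ k = l then 1 else 0) := by
    simp only [h]
    rw [Finset.sum_comm]
    refine Finset.sum_congr rfl fun l _ => ?_
    rw [Finset.sum_comm]
    refine Finset.sum_congr rfl fun b _ => ?_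
    rw [Finset.sum_comm]
    refine Finset.sum_congr rfl fun a _ => ?_
    rw [Finset.sum_comm]
    refine Finset.sum_congr rfl fun k _ => ?_
    rw [← Finset.mul_sum, complete]
  rw [h', Finset.sum_comm]
  simp [ite_and, Matrix.trace, Finset.sum_mul_sum]

lemma complete_two (U : unitaryGroup (Fin (d₁ * d₂)) ℂ) (B : Matrix (Fin d₁) (Fin d₂) ℂ)
    (C : Matrix (Fin d₂) (Fin d₁) ℂ) :
    ∑ j, ((colMat U j)ᴴ * B).trace * (colMat U j * C).trace = (B * C).trace := by
  have h : ∀ j, ((colMat U j)ᴴ * B).trace * (colMat U j * C).trace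
      = ∑ a, ∑ k, ∑ l, ∑ b, B b l * C k a * ((colMat U j)ᴴ l b * colMat U j a k) := fun j => by
    simp only [Matrix.trace, Matrix.diag, Matrix.mul_apply, Finset.sum_mul, Finset.mul_sum]
    refine Finset.sum_congr rfl fun l _ => Finset.sum_congr rfl fun b _ =>
      Finset.sum_congr rfl fun a _ => Finset.sum_congr rfl fun k _ => by ring
  have h' : ∑ j, ((colMat U j)ᴴ * B).trace * (colMat U j * C).trace
      = ∑ a, ∑ k, ∑ l, ∑ b, B b l * C k a * (if a = b ∧ k = l then 1 else 0) := by
    simp only [h]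
    rw [Finset.sum_comm]
    refine Finset.sum_congr rfl fun l _ => ?_
    rw [Finset.sum_comm]
    refine Finset.sum_congr rfl fun b _ => ?_
    rw [Finset.sum_comm]
    refine Finset.sum_congr rfl fun a _ => ?_
    rw [Finset.sum_comm]
    refine Finset.sum_congr rfl fun k _ => ?_
    rw [← Finset.mul_sum, complete]
  rw [h']
  simp [ite_and, Matrix.trace, Matrix.mul_apply]

/-! ### Contraction over the summed column -/

lemma integrable_of_cont {n : ℕ} {μ : Measure (unitaryGroup (Fin n) ℂ)} [IsFiniteMeasure μ]
    {f : unitaryGroup (Fin n) ℂ → ℂ} (hf : Continuous f) : Integrable f μ :=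
  have : BorelSpace (unitaryGroup (Fin n) ℂ) := inferInstance
  hf.integrable_of_hasCompactSupport (HasCompactSupport.of_compactSpace _)

lemma integral_sum_der {n : ℕ} {ι : Type*} [Fintype ι]
    {A : ι → Matrix (Fin n) (Fin n) ℂ} {F F' : ι → unitaryGroup (Fin n) ℂ → ℂ}
    (hF : ∀ i, Der (A i) (F i) (F' i))
    (μ : Measure (unitaryGroup (Fin n) ℂ)) [μ.IsHaarMeasure] [IsProbabilityMeasure μ] :
    ∫ U, ∑ i, F' i U ∂μ = 0 := by
  rw [integral_finsetSum _ fun i _ => integrable_of_cont (hF i).continuous]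
  exact Finset.sum_eq_zero fun i _ => (hF i).integral_eq_zero μ

/-! In the relations below the derivation along `E_{ji}` is applied to a product of traces, one of
which contains `Xⱼᴴ`, and the result is summed over `j`. When the derivation hits a factor `Xᵢ`, the
summand contains `Xⱼᴴ` and `Xⱼ`, and `U * Uᴴ = 1` splits a trace into two if both occur in the same
trace and merges two traces otherwise. When it hits the adjoint of a column, the summand carries no
`Xⱼ` and is either constant in `j` or supported at a single `j`. -/

section Contract
variable (U : unitaryGroup (Fin (d₁ * d₂)) ℂ) {p q r : ℕ}

lemma contract_adjacent (C : Matrix (Fin d₂) (Fin d₂) ℂ) :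
    ∑ j, ((colMat U j)ᴴ * (colMat U j * C)).trace = d₁ * C.trace := by
  simpa using complete_one U 1 C

lemma contract_mid (P : Matrix (Fin d₁) (Fin p) ℂ) (Q : Matrix (Fin p) (Fin d₁) ℂ)
    (C : Matrix (Fin d₂) (Fin d₂) ℂ) :
    ∑ j, ((colMat U j)ᴴ * (P * (Q * (colMat U j * C)))).trace = (P * Q).trace * C.trace := by
  simpa [Matrix.mul_assoc] using complete_one U (P * Q) C

lemma contract_end (P : Matrix (Fin d₁) (Fin p) ℂ) (Q : Matrix (Fin p) (Fin d₁) ℂ) :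
    ∑ j, ((colMat U j)ᴴ * (P * (Q * colMat U j))).trace = (P * Q).trace * d₂ := by
  simpa [Matrix.mul_assoc] using complete_one U (P * Q) 1

lemma contract_end' (P : Matrix (Fin d₁) (Fin p) ℂ) (Q : Matrix (Fin p) (Fin q) ℂ)
    (R : Matrix (Fin q) (Fin r) ℂ) (S : Matrix (Fin r) (Fin d₁) ℂ) :
    ∑ j, ((colMat U j)ᴴ * (P * (Q * (R * (S * colMat U j))))).trace
      = (P * (Q * (R * S))).trace * d₂ := by
  simpa [Matrix.mul_assoc] using complete_one U (P * (Q * (R * S))) 1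

lemma contract_pair (B : Matrix (Fin d₁) (Fin d₂) ℂ) (P : Matrix (Fin p) (Fin q) ℂ)
    (Q : Matrix (Fin q) (Fin d₁) ℂ) (R : Matrix (Fin d₂) (Fin p) ℂ) :
    ∑ j, ((colMat U j)ᴴ * B).trace * (P * (Q * (colMat U j * R))).trace
      = (B * (R * (P * Q))).trace := by
  rw [← complete_two U]
  refine Finset.sum_congr rfl fun j _ => ?_
  rw [← Matrix.mul_assoc P, Matrix.trace_mul_comm (P * Q)]
  simp only [Matrix.mul_assoc]

lemma contract_pair_end (B : Matrix (Fin d₁) (Fin d₂) ℂ) (P : Matrix (Fin d₂) (Fin p) ℂ)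
    (Q : Matrix (Fin p) (Fin q) ℂ) (R : Matrix (Fin q) (Fin d₁) ℂ) :
    ∑ j, ((colMat U j)ᴴ * B).trace * (P * (Q * (R * colMat U j))).trace
      = (B * (P * (Q * R))).trace := by
  rw [← complete_two U]
  refine Finset.sum_congr rfl fun j _ => ?_
  rw [Matrix.trace_mul_comm (colMat U j)]
  simp only [Matrix.mul_assoc]
end Contract

/-! ### Trace polynomials in one and two columns -/

/-- `Tr (ρᵢ²)`, where `ρᵢ = Xᵢ Xᵢᴴ`. -/
noncomputable def tr2 (U : unitaryGroup (Fin (d₁ * d₂)) ℂ) (i : Fin (d₁ * d₂)) : ℂ :=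
  (colMat U i * ((colMat U i)ᴴ * (colMat U i * (colMat U i)ᴴ))).trace

/-- `Tr (ρᵢ³)`. -/
noncomputable def tr3 (U : unitaryGroup (Fin (d₁ * d₂)) ℂ) (i : Fin (d₁ * d₂)) : ℂ :=
  (colMat U i * ((colMat U i)ᴴ * (colMat U i * ((colMat U i)ᴴ *
    (colMat U i * (colMat U i)ᴴ))))).trace

/-- `Tr (Xᵢ Xᵢᴴ Xⱼ Xⱼᴴ) + Tr (Xᵢᴴ Xᵢ Xⱼᴴ Xⱼ)`, the sum of the overlaps of the reduced states of
the columns `i` and `j` on the two tensor factors. -/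
noncomputable def overlap (U : unitaryGroup (Fin (d₁ * d₂)) ℂ) (i j : Fin (d₁ * d₂)) : ℂ :=
  (colMat U i * ((colMat U i)ᴴ * (colMat U j * (colMat U j)ᴴ))).trace +
    ((colMat U i)ᴴ * (colMat U i * ((colMat U j)ᴴ * colMat U j))).trace

/-- `Tr (Xᵢᴴ Xⱼ Xⱼᴴ Xⱼ)`. -/
noncomputable def cross (U : unitaryGroup (Fin (d₁ * d₂)) ℂ) (i j : Fin (d₁ * d₂)) : ℂ :=
  ((colMat U i)ᴴ * (colMat U j * ((colMat U j)ᴴ * colMat U j))).trace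

/-- `Tr (Xⱼᴴ Xⱼ Xⱼᴴ Xᵢ)`, the complex conjugate of `cross U i j`. -/
noncomputable def crossConj (U : unitaryGroup (Fin (d₁ * d₂)) ℂ) (i j : Fin (d₁ * d₂)) : ℂ :=
  ((colMat U j)ᴴ * (colMat U j * ((colMat U j)ᴴ * colMat U i))).trace

section Cyclic
variable (U : unitaryGroup (Fin (d₁ * d₂)) ℂ) (i k : Fin (d₁ * d₂))

lemma trace_rho : (colMat U i * (colMat U i)ᴴ).trace = 1 := by
  rw [Matrix.trace_mul_comm, orth]; simp

lemma trace_rot {a b c d : ℕ} (A : Matrix (Fin a) (Fin b) ℂ) (B : Matrix (Fin b) (Fin c) ℂ)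
    (C : Matrix (Fin c) (Fin d) ℂ) (D : Matrix (Fin d) (Fin a) ℂ) :
    (A * (B * (C * D))).trace = (B * (C * (D * A))).trace := by
  rw [Matrix.trace_mul_comm]; simp only [Matrix.mul_assoc]

lemma tr2_eq :
    (colMat U i * ((colMat U i)ᴴ * (colMat U i * (colMat U i)ᴴ))).trace = tr2 U i := rfl

lemma tr2_rot :
    ((colMat U i)ᴴ * (colMat U i * ((colMat U i)ᴴ * colMat U i))).trace = tr2 U i :=
  trace_rot ..

lemma tr3_eq : (colMat U i * ((colMat U i)ᴴ * (colMat U i * ((colMat U i)ᴴ *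
    (colMat U i * (colMat U i)ᴴ))))).trace = tr3 U i := rfl

lemma tr3_rot : ((colMat U i)ᴴ * (colMat U i * ((colMat U i)ᴴ * (colMat U i * ((colMat U i)ᴴ *
    colMat U i))))).trace = tr3 U i := by
  rw [Matrix.trace_mul_comm]; simp only [tr3, Matrix.mul_assoc]

lemma cross_eq :
    ((colMat U i)ᴴ * (colMat U k * ((colMat U k)ᴴ * colMat U k))).trace = cross U i k := rfl

lemma cross_rot₁ :
    (colMat U k * ((colMat U k)ᴴ * (colMat U k * (colMat U i)ᴴ))).trace = cross U i k :=
  (trace_rot ..).symm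

lemma cross_rot₂ :
    ((colMat U k)ᴴ * (colMat U k * ((colMat U i)ᴴ * colMat U k))).trace = cross U i k :=
  (trace_rot ..).symm.trans (cross_rot₁ U i k)

lemma cross_rot₃ :
    (colMat U k * ((colMat U i)ᴴ * (colMat U k * (colMat U k)ᴴ))).trace = cross U i k :=
  trace_rot ..

lemma crossConj_eq :
    ((colMat U k)ᴴ * (colMat U k * ((colMat U k)ᴴ * colMat U i))).trace = crossConj U i k := rfl

lemma crossConj_rot₁ :
    (colMat U i * ((colMat U k)ᴴ * (colMat U k * (colMat U k)ᴴ))).trace = crossConj U i k :=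
  trace_rot ..

lemma crossConj_rot₂ :
    (colMat U k * ((colMat U k)ᴴ * (colMat U i * (colMat U k)ᴴ))).trace = crossConj U i k :=
  (trace_rot ..).symm

lemma overlap_eq :
    overlap U i k = ((colMat U k)ᴴ * (colMat U i * ((colMat U i)ᴴ * colMat U k))).trace +
      ((colMat U i)ᴴ * (colMat U i * ((colMat U k)ᴴ * colMat U k))).trace := by
  rw [overlap, trace_rot (colMat U k)ᴴ]

lemma overlap_eq' :
    overlap U i k = ((colMat U k)ᴴ * (colMat U i * ((colMat U i)ᴴ * colMat U k))).trace +
      ((colMat U k)ᴴ * (colMat U k * ((colMat U i)ᴴ * colMat U i))).trace := by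
  rw [overlap_eq, trace_rot (colMat U k)ᴴ (colMat U k), trace_rot (colMat U k)]

lemma overlap_symm : overlap U i k = overlap U k i := by
  rw [overlap, overlap, trace_rot, trace_rot (colMat U i)ᴴ, trace_rot (colMat U i)ᴴ,
    trace_rot (colMat U i)]

end Cyclic

/-! ### Linear relations between the moments -/

section Moments
variable (μ : Measure (unitaryGroup (Fin (d₁ * d₂)) ℂ)) [μ.IsHaarMeasure]
    [IsProbabilityMeasure μ] (i k : Fin (d₁ * d₂))

/-- Derivation along `E_{ji}` of `Tr (Xⱼᴴ Xᵢ Xᵢᴴ Xᵢ)`, summed over `j`. -/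
lemma moment_tr2 :
    ∫ U, ((d₁ + d₂ : ℂ) - (d₁ * d₂ + 1) * tr2 U i) ∂μ = 0 := by
  have D := integral_sum_der (fun j => ((derM_col_conj i j j).mul ((derM_col i j i).mul
    ((derM_col_conj i j i).mul (derM_col i j i)))).trace) μ
  refine Eq.trans (integral_congr_ae (.of_forall fun U => ?_)) D
  simp only [if_true, one_smul, Matrix.smul_mul, Matrix.mul_smul, Matrix.mul_add,
    Matrix.trace_add, Matrix.trace_smul, smul_eq_mul, ite_mul, zero_mul,
    Finset.sum_add_distrib, Finset.sum_ite_eq, Finset.sum_const, Finset.card_univ,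
    Fintype.card_fin, Finset.mem_univ, contract_adjacent, contract_end, nsmul_eq_mul,
    Nat.cast_mul, orth, trace_rho, tr2_rot]
  ring

/-- Derivation along `E_{ji}` of `Tr (Xⱼᴴ Xᵢ Xᵢᴴ Xᵢ Xᵢᴴ Xᵢ)`, summed over `j`. -/
lemma moment_tr3 :
    ∫ U, ((d₁ + d₂ : ℂ) * tr2 U i + 1 - (d₁ * d₂ + 2) * tr3 U i) ∂μ = 0 := by
  have D := integral_sum_der (fun j => ((derM_col_conj i j j).mul ((derM_col i j i).mul
    ((derM_col_conj i j i).mul ((derM_col i j i).mul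
    ((derM_col_conj i j i).mul (derM_col i j i)))))).trace) μ
  refine Eq.trans (integral_congr_ae (.of_forall fun U => ?_)) D
  simp only [if_true, one_smul, Matrix.smul_mul, Matrix.mul_smul, Matrix.mul_add,
    Matrix.trace_add, Matrix.trace_smul, smul_eq_mul, ite_mul, zero_mul,
    Finset.sum_add_distrib, Finset.sum_ite_eq, Finset.sum_const, Finset.card_univ,
    Fintype.card_fin, Finset.mem_univ, contract_adjacent, contract_mid, contract_end',
    nsmul_eq_mul, Nat.cast_mul, orth, trace_rho, tr2_rot, tr3_rot]
  rw [tr2_eq]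
  ring

/-- Derivation along `E_{ji}` of `Tr (Xⱼᴴ Xᵢ Xᵢᴴ Xᵢ) * Tr (Xᵢ Xᵢᴴ Xᵢ Xᵢᴴ)`, summed over `j`. -/
lemma moment_tr2_sq :
    ∫ U, ((d₁ + d₂ : ℂ) * tr2 U i + 2 * tr3 U i - (d₁ * d₂ + 3) * (tr2 U i * tr2 U i)) ∂μ = 0 := by
  have D := integral_sum_der (fun j => ((derM_col_conj i j j).mul ((derM_col i j i).mul
    ((derM_col_conj i j i).mul (derM_col i j i)))).trace.mul
    ((derM_col i j i).mul ((derM_col_conj i j i).mul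
      ((derM_col i j i).mul (derM_col_conj i j i)))).trace) μ
  refine Eq.trans (integral_congr_ae (.of_forall fun U => ?_)) D
  simp only [if_true, one_smul, Matrix.smul_mul, Matrix.mul_smul, Matrix.mul_add,
    Matrix.trace_add, Matrix.trace_smul, smul_eq_mul, ite_mul, zero_mul, mul_ite, mul_zero, add_mul,
    mul_add, ← Finset.sum_mul,
    Finset.sum_add_distrib, Finset.sum_ite_eq, Finset.sum_const, Finset.card_univ,
    Fintype.card_fin, Finset.mem_univ, contract_adjacent, contract_end, contract_pair,
    complete_two,
    nsmul_eq_mul, Nat.cast_mul, orth, trace_rho, tr2_rot]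
  simp only [Matrix.mul_assoc, tr2_eq, tr3_eq]
  ring

/-- Derivation along `E_{jk}` of `Tr (Xⱼᴴ Xₖ Xₖᴴ Xₖ) * Tr (Xᵢ Xᵢᴴ Xᵢ Xᵢᴴ)`, summed over `j`. -/
lemma moment_tr2_mul (hik : i ≠ k) :
    ∫ U, ((d₁ + d₂ : ℂ) * tr2 U i - 2 * (cross U k i * cross U i k)
      - (d₁ * d₂ + 1) * (tr2 U i * tr2 U k)) ∂μ = 0 := by
  have D := integral_sum_der (fun j => ((derM_col_conj k j j).mul ((derM_col k j k).mul
    ((derM_col_conj k j k).mul (derM_col k j k)))).trace.mul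
    ((derM_col k j i).mul ((derM_col_conj k j i).mul
      ((derM_col k j i).mul (derM_col_conj k j i)))).trace) μ
  refine Eq.trans (integral_congr_ae (.of_forall fun U => ?_)) D
  simp only [if_true, one_smul, Matrix.smul_mul, Matrix.mul_smul, Matrix.mul_add,
    Matrix.trace_add, Matrix.trace_smul, smul_eq_mul, ite_mul, zero_mul, mul_ite, mul_zero, add_mul,
    mul_add, ← Finset.sum_mul, hik, if_false, zero_add,
    Finset.sum_add_distrib, Finset.sum_ite_eq, Finset.sum_const, Finset.card_univ,
    Fintype.card_fin, Finset.mem_univ, contract_adjacent, contract_end,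
    nsmul_eq_mul, Nat.cast_mul, orth, trace_rho, tr2_rot]
  simp only [tr2_eq, cross_eq, cross_rot₁, cross_rot₃]
  ring

/-- Derivation along `E_{jk}` of `Tr (Xⱼᴴ Xᵢ Xᵢᴴ Xᵢ) * Tr (Xᵢᴴ Xᵢ Xᵢᴴ Xₖ)`, summed over `j`. -/
lemma moment_cross (hik : i ≠ k) :
    ∫ U, (tr3 U i - (d₁ * d₂ + 1) * (cross U k i * crossConj U k i)
      - tr2 U i * overlap U i k) ∂μ = 0 := by
  have D := integral_sum_der (fun j => ((derM_col_conj k j j).mul ((derM_col k j i).mul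
    ((derM_col_conj k j i).mul (derM_col k j i)))).trace.mul
    ((derM_col_conj k j i).mul ((derM_col k j i).mul
      ((derM_col_conj k j i).mul (derM_col k j k)))).trace) μ
  refine Eq.trans (integral_congr_ae (.of_forall fun U => ?_)) D
  simp only [if_true, one_smul, Matrix.smul_mul, Matrix.mul_smul, Matrix.mul_add,
    Matrix.trace_add, Matrix.trace_smul, smul_eq_mul, ite_mul, zero_mul, mul_ite, mul_zero, add_mul,
    mul_add, ← Finset.sum_mul, hik, if_false, add_zero, zero_add,
    Finset.sum_add_distrib, Finset.sum_ite_eq, Finset.sum_const, Finset.card_univ,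
    Fintype.card_fin, Finset.mem_univ,
    contract_pair_end,
    nsmul_eq_mul, Nat.cast_mul, tr2_rot]
  simp only [Matrix.mul_assoc, tr3_eq, cross_eq, cross_rot₂,
    crossConj_eq, overlap_eq]
  ring

/-- Derivation along `E_{ki}`, an infinitesimal rotation of the columns `i` and `k`, of
`Tr (Xᵢ Xᵢᴴ Xᵢ Xᵢᴴ) * Tr (Xₖᴴ Xᵢ Xᵢᴴ Xᵢ)`. -/
lemma rot_cross (hik : i ≠ k) :
    ∫ U, (tr2 U i * overlap U i k + 2 * (cross U k i * crossConj U k i)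
      - tr2 U i * tr2 U i) ∂μ = 0 := by
  have D := ((((derM_col i k i).mul ((derM_col_conj i k i).mul
      ((derM_col i k i).mul (derM_col_conj i k i)))).trace.mul
    ((derM_col_conj i k k).mul ((derM_col i k i).mul
    ((derM_col_conj i k i).mul (derM_col i k i)))).trace)).integral_eq_zero μ
  refine Eq.trans (integral_congr_ae (.of_forall fun U => ?_)) D
  simp only [if_true, one_smul, Matrix.smul_mul, Matrix.mul_smul, Matrix.mul_add,
    Matrix.trace_add, Matrix.trace_smul, smul_eq_mul, zero_mul,
    hik, if_false, add_zero, zero_add, tr2_rot]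
  simp only [tr2_eq, cross_eq,
    crossConj_rot₁, crossConj_rot₂, overlap_eq']
  ring

/-- Derivation along `E_{ik}` of `Tr (Xᵢ Xᵢᴴ Xᵢ Xᵢᴴ) * Tr (Xᵢᴴ Xₖ Xₖᴴ Xₖ)`. -/
lemma rot_tr2_mul (hik : i ≠ k) :
    ∫ U, (tr2 U i * overlap U i k - 2 * (cross U k i * cross U i k) - tr2 U i * tr2 U k) ∂μ = 0 := by
  have D := ((((derM_col k i i).mul ((derM_col_conj k i i).mul
      ((derM_col k i i).mul (derM_col_conj k i i)))).trace.mul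
    ((derM_col_conj k i i).mul ((derM_col k i k).mul
    ((derM_col_conj k i k).mul (derM_col k i k)))).trace)).integral_eq_zero μ
  refine Eq.trans (integral_congr_ae (.of_forall fun U => ?_)) D
  simp only [if_true, one_smul, Matrix.smul_mul, Matrix.mul_smul, Matrix.mul_add,
    Matrix.trace_add, Matrix.trace_smul, smul_eq_mul, zero_mul,
    hik, hik.symm, if_false, zero_add, tr2_rot]
  rw [overlap_symm]
  simp only [tr2_eq, cross_eq, cross_rot₁, cross_rot₃, overlap_eq']
  ring

end Moments

/-! ### Solving the linear system -/

section Continuity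
variable (i k : Fin (d₁ * d₂))

@[fun_prop]
lemma continuous_colMat : Continuous fun U : unitaryGroup (Fin (d₁ * d₂)) ℂ => colMat U i :=
  continuous_matrix fun a b => continuous_subtype_val.matrix_elem (finProdFinEquiv (a, b)) i

@[fun_prop]
lemma continuous_tr2 : Continuous fun U : unitaryGroup (Fin (d₁ * d₂)) ℂ => tr2 U i := by
  unfold tr2; fun_prop

@[fun_prop]
lemma continuous_tr3 : Continuous fun U : unitaryGroup (Fin (d₁ * d₂)) ℂ => tr3 U i := by
  unfold tr3; fun_prop

@[fun_prop]
lemma continuous_overlap : Continuous fun U : unitaryGroup (Fin (d₁ * d₂)) ℂ => overlap U i k := by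
  unfold overlap; fun_prop

@[fun_prop]
lemma continuous_cross : Continuous fun U : unitaryGroup (Fin (d₁ * d₂)) ℂ => cross U i k := by
  unfold cross; fun_prop

@[fun_prop]
lemma continuous_crossConj :
    Continuous fun U : unitaryGroup (Fin (d₁ * d₂)) ℂ => crossConj U i k := by
  unfold crossConj; fun_prop

end Continuity

/-- Elimination in the linear system for the seven moments. With `c = d₁ + d₂` and `N = d₁ d₂` the
unknowns are the expectations `P` of `tr2 U i`, `T` of `tr3 U i`, `R` of `tr2 U i ^ 2`, `q` of
`cross U k i * cross U i k`, `w` of `cross U k i * crossConj U k i`, `S` of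
`tr2 U i * overlap U i k`, and `Q` of `tr2 U i * tr2 U k`. -/
lemma solve_moments {c N P T R q w S Q : ℂ} (e1 : c - (N + 1) * P = 0)
    (e2 : c * P + 1 - (N + 2) * T = 0) (e3 : c * P + 2 * T - (N + 3) * R = 0)
    (e4 : c * P - 2 * q - (N + 1) * Q = 0) (e5 : T - (N + 1) * w - S = 0)
    (e6 : S + 2 * w - R = 0) (e7 : S - 2 * q - Q = 0) (hN : N ≠ 0) (hN1 : N - 1 ≠ 0)
    (hp2 : N + 2 ≠ 0) (hp3 : N + 3 ≠ 0) :
    Q = ((N * (N + 2) - 4) * c ^ 2 + 4) / (N * (N - 1) * (N + 2) * (N + 3)) := by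
  rw [eq_div_iff (by simp [*])]
  have h1 : N * (N - 1) * Q = (N - 1) * c * P + 2 * T - (N + 1) * R := by
    linear_combination (N - 1) * (e7 - e4) - 2 * e5 + (-2 - (N - 1)) * e6
  have h2 : N * (N - 1) * (N + 2) * (N + 3) * Q
      = ((N + 1) * (N * (N + 2) - 4)) * (c * P) + 4 := by
    linear_combination (N + 2) * (N + 3) * h1 + (N + 1) * (N + 2) * e3
      - (2 * (N + 3) - 2 * (N + 1)) * e2
  linear_combination h2 - (N * (N + 2) - 4) * c * e1

lemma integral_tr2_mul_tr2 (hd : 2 ≤ d₁ * d₂) (μ : Measure (unitaryGroup (Fin (d₁ * d₂)) ℂ))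
    [μ.IsHaarMeasure] [IsProbabilityMeasure μ] {i k : Fin (d₁ * d₂)} (hik : i ≠ k) :
    ∫ U, tr2 U i * tr2 U k ∂μ =
      (((d₁ : ℂ) * d₂ * ((d₁ : ℂ) * d₂ + 2) - 4) * ((d₁ : ℂ) + d₂) ^ 2 + 4) /
        ((d₁ : ℂ) * d₂ * ((d₁ : ℂ) * d₂ - 1) * ((d₁ : ℂ) * d₂ + 2) * ((d₁ : ℂ) * d₂ + 3)) := by
  have e1 := moment_tr2 μ i
  have e2 := moment_tr3 μ i
  have e3 := moment_tr2_sq μ i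
  have e4 := moment_tr2_mul μ i k hik
  have e5 := moment_cross μ i k hik
  have e6 := rot_cross μ i k hik
  have e7 := rot_tr2_mul μ i k hik
  have pos : ∀ m : ℕ, (d₁ : ℂ) * d₂ + (m + 1 : ℕ) ≠ 0 := fun m => by
    rw [← Nat.cast_mul, ← Nat.cast_add]; exact Nat.cast_ne_zero.2 (by omega)
  have I : ∀ {f : unitaryGroup (Fin (d₁ * d₂)) ℂ → ℂ}, Continuous f → Integrable f μ :=
    integrable_of_cont
  rw [integral_sub (I (by fun_prop)) (I (by fun_prop)), integral_const_mul] at e1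
  rw [integral_sub (I (by fun_prop)) (I (by fun_prop)),
    integral_add (I (by fun_prop)) (I (by fun_prop)), integral_const_mul, integral_const_mul] at e2
  rw [integral_sub (I (by fun_prop)) (I (by fun_prop)),
    integral_add (I (by fun_prop)) (I (by fun_prop)), integral_const_mul, integral_const_mul,
    integral_const_mul] at e3
  rw [integral_sub (I (by fun_prop)) (I (by fun_prop)),
    integral_sub (I (by fun_prop)) (I (by fun_prop)), integral_const_mul, integral_const_mul,
    integral_const_mul] at e4
  rw [integral_sub (I (by fun_prop)) (I (by fun_prop)),
    integral_sub (I (by fun_prop)) (I (by fun_prop)), integral_const_mul] at e5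
  rw [integral_sub (I (by fun_prop)) (I (by fun_prop)),
    integral_add (I (by fun_prop)) (I (by fun_prop)), integral_const_mul] at e6
  rw [integral_sub (I (by fun_prop)) (I (by fun_prop)),
    integral_sub (I (by fun_prop)) (I (by fun_prop)), integral_const_mul] at e7
  simp only [integral_const, probReal_univ, one_smul] at e1 e2
  refine solve_moments e1 e2 e3 e4 e5 e6 e7 ?_ ?_ ?_ ?_
  · exact_mod_cast (by omega : d₁ * d₂ ≠ 0)
  · rw [sub_ne_zero]; exact_mod_cast (by omega : d₁ * d₂ ≠ 1)
  · exact_mod_cast pos 1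
  · exact_mod_cast pos 2

lemma trace_rho_sq (U : unitaryGroup (Fin (d₁ * d₂)) ℂ) (i : Fin (d₁ * d₂)) :
    (rho U i * rho U i).trace = tr2 U i := by
  rw [rho_eq, Matrix.mul_assoc, tr2_eq]

/-- `E[Tr(ρ₀²) · Tr(ρ₁²)]` for a Haar-random unitary of size `d₁d₂ ≥ 2`. -/
theorem stmt4 (d₁ d₂ : ℕ) (hd₁ : 0 < d₁) (hd₂ : 0 < d₂) (hd : 2 ≤ d₁ * d₂)
    (μ : Measure (Matrix.unitaryGroup (Fin (d₁ * d₂)) ℂ))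
    [μ.IsHaarMeasure] [IsProbabilityMeasure μ] :
    let i0 : Fin (d₁ * d₂) := ⟨0, by omega⟩
    let i1 : Fin (d₁ * d₂) := ⟨1, by omega⟩
    ∫ U, Matrix.trace (rho U i0 * rho U i0) * Matrix.trace (rho U i1 * rho U i1) ∂μ =
      ((((d₁ : ℂ) * (d₂ : ℂ) * ((d₁ : ℂ) * (d₂ : ℂ) + 2) - 4) * ((d₁ : ℂ) + (d₂ : ℂ)) ^ 2 + 4)) / ((d₁ : ℂ) * (d₂ : ℂ) * ((d₁ : ℂ) * (d₂ : ℂ) - 1) * ((d₁ : ℂ) * (d₂ : ℂ) + 2) * ((d₁ : ℂ) * (d₂ : ℂ) + 3)) := by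
  intro i0 i1
  simp only [trace_rho_sq]
  exact integral_tr2_mul_tr2 hd μ (by simp [i0, i1])
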